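/- Let n ≥ 1 be an integer, r ≥ 1, ε ∈ (0,1), α, β real numbers and A > 0. There exist constants C > 0, c₀ > 0 and k₀ (depending only on n, r, ε, α, β, A) such that for every integer k ≥ k₀, every (α,β,A)-admissible function p : Λ_n → [0,∞), and every r-reduced n×n matrix Y: q_k(Y) ≤ C·[ (k^n/det(Y))^{(n+1)/2 − β} · k^{n/4 + α} + exp(−c₀ k^{ε}) · det(Y)^{−(n+1)/2} ]. -/

import Mathlib

open scoped Real ENNReal

/-- `Λ_n`: real symmetric positive definite `n × n` matrices with integral diagonal
entries such that `2T` has integer entries (half-integral matrices). -/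
def IsHalfIntegral {n : ℕ} (T : Matrix (Fin n) (Fin n) ℝ) : Prop :=
  T.PosDef ∧ (∀ i, ∃ z : ℤ, T i i = z) ∧ (∀ i j, ∃ z : ℤ, 2 * T i j = z)

abbrev Lambda (n : ℕ) := {T : Matrix (Fin n) (Fin n) ℝ // IsHalfIntegral T}

/-- The Loewner order: `A ≤ B` iff `B - A` is positive semidefinite. -/
def LoewnerLE {n : ℕ} (A B : Matrix (Fin n) (Fin n) ℝ) : Prop := (B - A).PosSemidef

/-- The diagonal part `Y_D` of a matrix `Y`. -/
def diagPart {n : ℕ} (Y : Matrix (Fin n) (Fin n) ℝ) : Matrix (Fin n) (Fin n) ℝ :=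
  Matrix.diagonal fun i => Y i i

/-- `Y` is `r`-reduced: positive definite with `Y_D / r ≤ Y ≤ r • Y_D` in the
Loewner order. -/
def MinkReduced {n : ℕ} (r : ℝ) (Y : Matrix (Fin n) (Fin n) ℝ) : Prop :=
  Y.PosDef ∧ LoewnerLE (r⁻¹ • diagPart Y) Y ∧ LoewnerLE Y (r • diagPart Y)

/-- `p : Λ_n → [0,∞)` is `(α,β,A)`-admissible for weight `k`:
`p(T)^{1/2} ≤ A · (4π)^{nk/2} · k^α · det(T)^{k/2−β} / Γ(k)^{n/2}`. -/
def Admissible (n k : ℕ) (α β A : ℝ) (p : Lambda n → ℝ) : Prop :=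
  (∀ T, 0 ≤ p T) ∧
  ∀ T : Lambda n, Real.sqrt (p T) ≤
    A * (4 * π) ^ ((n * k : ℝ) / 2) * (k : ℝ) ^ α *
      (T.1.det) ^ ((k : ℝ) / 2 - β) / Real.Gamma k ^ ((n : ℝ) / 2)

/-- `q_k(Y) = ∑_{T ∈ Λ_n} p(T)^{1/2} · det(Y)^{k/2} · exp(−2π tr(TY))`,
as a sum in `[0,∞]`. -/
noncomputable def qk (n k : ℕ) (p : Lambda n → ℝ)
    (Y : Matrix (Fin n) (Fin n) ℝ) : ℝ≥0∞ :=
  ∑' T : Lambda n, ENNReal.ofReal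
    (Real.sqrt (p T) * Y.det ^ ((k : ℝ) / 2) * Real.exp (-2 * π * (T.1 * Y).trace))


lemma psd_factor {n : ℕ} {T : Matrix (Fin n) (Fin n) ℝ} (hT : T.PosSemidef) :
    ∃ B : Matrix (Fin n) (Fin n) ℝ, T = B.conjTranspose * B := by
  open scoped MatrixOrder ComplexOrder Matrix.Norms.L2Operator in
  exact CStarAlgebra.nonneg_iff_eq_star_mul_self.mp hT.nonneg

lemma trace_mul_nonneg' {n : ℕ} {T Q : Matrix (Fin n) (Fin n) ℝ} (hT : T.PosSemidef)
    (hQ : Q.PosSemidef) : 0 ≤ (T * Q).trace := by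
  obtain ⟨B, rfl⟩ := psd_factor hT
  have := (hQ.mul_mul_conjTranspose_same B).trace_nonneg
  rwa [Matrix.mul_assoc, Matrix.trace_mul_comm] 

lemma psd_det_le {n : ℕ} {P : Matrix (Fin n) (Fin n) ℝ} (hP : P.PosSemidef) :
    P.det ≤ Real.exp (P.trace - n) := by
  rw [hP.1.det_eq_prod_eigenvalues, hP.1.trace_eq_sum_eigenvalues]
  have : (∑ i, (hP.1.eigenvalues i : ℝ)) - n = ∑ i, (hP.1.eigenvalues i - 1) := by
    simp [Finset.sum_sub_distrib]
  simp only [RCLike.ofReal_real_eq_id, id_eq] at *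
  rw [this, Real.exp_sum]
  apply Finset.prod_le_prod
  · intro i _; exact hP.eigenvalues_nonneg i
  · intro i _
    have := Real.add_one_le_exp (hP.1.eigenvalues i - 1)
    linarith

lemma det_mul_le {n : ℕ} {T Q : Matrix (Fin n) (Fin n) ℝ} (hT : T.PosSemidef)
    (hQ : Q.PosSemidef) : T.det * Q.det ≤ Real.exp ((T * Q).trace - n) := by
  obtain ⟨B, rfl⟩ := psd_factor hT
  have := psd_det_le (hQ.mul_mul_conjTranspose_same B)
  rw [Matrix.trace_mul_comm, ← Matrix.mul_assoc] at this
  refine le_trans (le_of_eq ?_) this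
  simp only [Matrix.det_mul]; ring

lemma hadamard_le {n : ℕ} {Y : Matrix (Fin n) (Fin n) ℝ} (hY : Y.PosDef) :
    Y.det ≤ ∏ i, Y i i := by
  have hd : ∀ i, 0 < Y i i := fun i => hY.diag_pos
  have hD : (Matrix.diagonal fun i => (Y i i)⁻¹).PosSemidef :=
    Matrix.PosSemidef.diagonal (fun i => (inv_pos.2 (hd i)).le)
  have h := det_mul_le hD hY.posSemidef
  have ht : ((Matrix.diagonal fun i => (Y i i)⁻¹) * Y).trace = n := by
    simp [Matrix.trace, Matrix.diagonal_mul, (hd _).ne']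
  rw [ht, sub_self, Real.exp_zero, Matrix.det_diagonal, Finset.prod_inv_distrib] at h
  have hp : 0 < ∏ i, Y i i := Finset.prod_pos fun i _ => hd i
  rwa [inv_mul_le_iff₀ hp, mul_one] at h

lemma offdiag_sq_le {n : ℕ} {T : Matrix (Fin n) (Fin n) ℝ} (hT : T.PosSemidef) (i j : Fin n) :
    T i j ^ 2 ≤ T i i * T j j := by
  have h := (hT.submatrix ![i, j]).det_nonneg
  have hs : T j i = T i j := by simpa using hT.1.apply i j
  rw [Matrix.det_fin_two] at h
  simp [hs] at h
  nlinarith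

lemma prod_pairs {n : ℕ} (g : Fin n → ℝ) :
    ∏ i, ∏ j, (if i < j then g i * g j else 1) = ∏ i, g i ^ (n - 1) := by
  have h1 : ∀ i j : Fin n, (if i < j then g i * g j else 1) =
      (if i < j then g i else 1) * (if i < j then g j else 1) := by
    intro i j; split_ifs <;> simp
  simp_rw [h1, Finset.prod_mul_distrib]
  rw [Finset.prod_comm (f := fun i j => if i < j then g j else 1), ← Finset.prod_mul_distrib]
  refine Finset.prod_congr rfl fun i _ => ?_
  rw [← Finset.prod_mul_distrib]
  have h2 : ∀ j : Fin n, (if i < j then g i else 1) * (if j < i then g i else 1) =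
      if j = i then 1 else g i := by
    intro j
    rcases lt_trichotomy i j with h | h | h
    · simp [h, h.not_gt, h.ne']
    · simp [h]
    · simp [h, h.not_gt, h.ne]
  simp_rw [h2, Finset.prod_ite, Finset.prod_const]
  simp [Finset.filter_ne']

lemma tsum_pi_prod : ∀ (n : ℕ) (F : Fin n → ℕ → ℝ≥0∞),
    ∑' d : Fin n → ℕ, ∏ i, F i (d i) = ∏ i, ∑' m, F i m
  | 0, F => by simp
  | n+1, F => by
    rw [← (Fin.consEquiv (fun _ : Fin (n+1) => ℕ)).tsum_eq, ENNReal.tsum_prod', Fin.prod_univ_succ]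
    simp only [Fin.consEquiv_apply, Fin.prod_univ_succ, Fin.cons_zero, Fin.cons_succ]
    simp_rw [ENNReal.tsum_mul_left, tsum_pi_prod n (fun i => F i.succ), ENNReal.tsum_mul_right]

lemma one_dim (N : ℕ) (b : ℝ) (hb : 0 < b) :
    ∑' m : ℕ, ENNReal.ofReal (√((m : ℝ) + 1) ^ N * Real.exp (-(b * (m + 1)))) ≤
      ENNReal.ofReal (2 * √(N.factorial : ℝ) * (√b ^ (N + 2))⁻¹) := by
  have hpt : ∀ m : ℕ, √((m : ℝ) + 1) ^ N * Real.exp (-(b * (m + 1))) ≤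
      √(N.factorial : ℝ) * (√b ^ N)⁻¹ * (Real.exp (-(b/2)) * Real.exp (-(b / 2)) ^ m) := by
    intro m
    have hx : 0 ≤ b * ((m : ℝ) + 1) := by positivity
    have h1 := Real.pow_div_factorial_le_exp _ hx N
    rw [div_le_iff₀ (by positivity)] at h1
    have h2 := Real.sqrt_le_sqrt h1
    have e1 : √((b * ((m : ℝ) + 1)) ^ N) = √b ^ N * √((m : ℝ) + 1) ^ N := by
      rw [← mul_pow, ← Real.sqrt_mul hb.le]
      rw [Real.sqrt_eq_iff_mul_self_eq (by positivity) (by positivity), ← mul_pow,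
        Real.mul_self_sqrt hx]
    have e2 : √(Real.exp (b * ((m : ℝ) + 1)) * (N.factorial : ℝ)) =
        Real.exp (b * ((m : ℝ) + 1) / 2) * √(N.factorial : ℝ) := by
      rw [Real.sqrt_mul (Real.exp_pos _).le, Real.exp_half]
    rw [e1, e2] at h2
    have e3 : Real.exp (-(b/2)) * Real.exp (-(b / 2)) ^ m = Real.exp (-(b * (m+1) / 2)) := by
      rw [← Real.exp_nat_mul, ← Real.exp_add]; congr 1; ring
    have e4 : Real.exp (-(b * ((m:ℝ) + 1))) =
        Real.exp (-(b * (m+1) / 2)) * Real.exp (-(b * (m+1) / 2)) := by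
      rw [← Real.exp_add]; congr 1; ring
    have e5 : Real.exp (b * ((m : ℝ) + 1) / 2) * Real.exp (-(b * (m+1) / 2)) = 1 := by
      rw [← Real.exp_add]; simp
    have hs : 0 < √b ^ N := by positivity
    have h3 : √((m : ℝ) + 1) ^ N ≤
        (√b ^ N)⁻¹ * (Real.exp (b * ((m : ℝ) + 1) / 2) * √(N.factorial : ℝ)) := by
      rw [le_inv_mul_iff₀ hs]; exact h2
    rw [e3, e4]
    set E := Real.exp (-(b * ((m:ℝ)+1) / 2))
    calc √((m : ℝ) + 1) ^ N * (E * E)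
        ≤ ((√b ^ N)⁻¹ * (Real.exp (b * ((m : ℝ) + 1) / 2) * √(N.factorial : ℝ))) * (E * E) := by
          gcongr
      _ = √(N.factorial : ℝ) * (√b ^ N)⁻¹ * E * (Real.exp (b * ((m : ℝ) + 1) / 2) * E) := by ring
      _ = _ := by rw [e5]; ring
  have hlt : Real.exp (-(b/2)) < 1 := by rw [Real.exp_lt_one_iff]; linarith
  have hsum := (summable_geometric_of_lt_one (Real.exp_pos _).le hlt)
  have hs2 : Summable fun m : ℕ => √(N.factorial : ℝ) * (√b ^ N)⁻¹ *
      (Real.exp (-(b/2)) * Real.exp (-(b / 2)) ^ m) :=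
    (hsum.mul_left _).mul_left _
  refine (ENNReal.tsum_le_tsum fun m => ENNReal.ofReal_le_ofReal (hpt m)).trans ?_
  rw [← ENNReal.ofReal_tsum_of_nonneg (fun m => by positivity) hs2]
  apply ENNReal.ofReal_le_ofReal
  rw [tsum_mul_left, tsum_mul_left, tsum_geometric_of_lt_one (Real.exp_pos _).le hlt]
  have hg : Real.exp (-(b/2)) * (1 - Real.exp (-(b/2)))⁻¹ ≤ 2 / b := by
    rw [← div_eq_mul_inv, div_le_div_iff₀ (by linarith) hb]
    have h1 := Real.add_one_le_exp (b/2)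
    have h2 : Real.exp (b/2) * Real.exp (-(b/2)) = 1 := by rw [← Real.exp_add]; simp
    nlinarith [Real.exp_pos (-(b/2))]
  calc _ ≤ √(N.factorial : ℝ) * (√b ^ N)⁻¹ * (2 / b) := by gcongr
    _ = _ := by
      rw [pow_add, Real.sq_sqrt hb.le]; field_simp

/-- box of integer off-diagonal data -/
noncomputable def offBox {n : ℕ} (d : Fin n → ℕ) : Finset (Fin n → Fin n → ℤ) :=
  Fintype.piFinset fun i => Fintype.piFinset fun j =>
    if i < j then Finset.Icc (-(⌊2 * (√((d i : ℝ) + 1) * √((d j : ℝ) + 1))⌋₊ : ℤ))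
      (⌊2 * (√((d i : ℝ) + 1) * √((d j : ℝ) + 1))⌋₊ : ℤ) else {0}

lemma offBox_card {n : ℕ} (d : Fin n → ℕ) :
    ((offBox d).card : ℝ) ≤ 5 ^ (n * n) * ∏ i, √((d i : ℝ) + 1) ^ (n - 1) := by
  have hc : ∀ i, 1 ≤ √((d i : ℝ) + 1) := fun i => by
    rw [Real.one_le_sqrt]; linarith [(Nat.cast_nonneg (d i) : (0:ℝ) ≤ d i)]
  have h5 : (5 : ℝ) ^ (n * n) = ∏ _i : Fin n, ∏ _j : Fin n, (5 : ℝ) := by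
    simp [pow_mul]
  rw [← prod_pairs, h5, ← Finset.prod_mul_distrib]
  simp_rw [← Finset.prod_mul_distrib]
  unfold offBox
  simp_rw [Fintype.card_piFinset]
  push_cast
  refine Finset.prod_le_prod (fun i _ => Finset.prod_nonneg fun j _ => by positivity) fun i _ => ?_
  refine Finset.prod_le_prod (fun j _ => by positivity) fun j _ => ?_
  split_ifs with h
  · rw [Int.card_Icc]
    have h1 := hc i
    have h2 := hc j
    have h3 : 1 ≤ √((d i : ℝ) + 1) * √((d j : ℝ) + 1) := one_le_mul_of_one_le_of_one_le h1 h2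
    set w := √((d i : ℝ) + 1) * √((d j : ℝ) + 1)
    have h4 := Nat.floor_le (show 0 ≤ 2 * w by linarith)
    have h6 : ((⌊2 * w⌋₊ : ℤ) + 1 - -(⌊2 * w⌋₊ : ℤ)).toNat = 2 * ⌊2 * w⌋₊ + 1 := by omega
    rw [h6]
    push_cast
    linarith
  · simp

lemma lambda_diag {n : ℕ} (T : Lambda n) (i : Fin n) : ∃ d : ℕ, T.1 i i = d + 1 := by
  obtain ⟨hT, h1, -⟩ := T.2
  obtain ⟨z, hz⟩ := h1 i
  have hp : 0 < T.1 i i := hT.diag_pos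
  rw [hz] at hp
  have : 0 < z := by exact_mod_cast hp
  refine ⟨(z - 1).toNat, ?_⟩
  rw [hz]
  have h2 : ((z - 1).toNat : ℤ) = z - 1 := by omega
  have h3 : (((z - 1).toNat : ℤ) : ℝ) = ((z - 1 : ℤ) : ℝ) := by rw [h2]
  push_cast at h3
  linarith

lemma lambda_inj (n : ℕ) : ∃ φ : Lambda n → (Σ d : Fin n → ℕ, offBox d),
    Function.Injective φ ∧ ∀ T i, T.1 i i = ((φ T).1 i : ℝ) + 1 := by
  choose d hd using fun T : Lambda n => lambda_diag T
  choose z hz using fun T : Lambda n => T.2.2.2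
  have hmem : ∀ T : Lambda n, (fun i j => if i < j then z T i j else 0) ∈ offBox (d T) := by
    intro T
    unfold offBox
    rw [Fintype.mem_piFinset]; intro i
    rw [Fintype.mem_piFinset]; intro j
    split_ifs with h
    · have h1 := offdiag_sq_le T.2.1.posSemidef i j
      rw [hd, hd] at h1
      have h2 : |T.1 i j| ≤ √((d T i : ℝ) + 1) * √((d T j : ℝ) + 1) := by
        rw [← Real.sqrt_mul (by positivity)]
        exact Real.abs_le_sqrt h1
      have h3 : ((|z T i j| : ℤ) : ℝ) ≤ 2 * (√((d T i : ℝ) + 1) * √((d T j : ℝ) + 1)) := by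
        push_cast
        rw [← hz, abs_mul]
        simpa using h2
      rw [Finset.mem_Icc, ← abs_le]
      have h4 : (z T i j).natAbs ≤ ⌊2 * (√((d T i : ℝ) + 1) * √((d T j : ℝ) + 1))⌋₊ := by
        apply Nat.le_floor
        rw [Nat.cast_natAbs]; exact h3
      rw [Int.abs_eq_natAbs]
      exact_mod_cast h4
    · simp
  refine ⟨fun T => ⟨d T, ⟨_, hmem T⟩⟩, ?_, fun T i => hd T i⟩
  intro T T' h
  have e1 : d T = d T' := congrArg (fun x => x.1) h
  have e2 : (fun i j => if i < j then z T i j else 0) = (fun i j => if i < j then z T' i j else 0) :=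
    congrArg (fun x : (Σ d : Fin n → ℕ, offBox d) => (x.2 : Fin n → Fin n → ℤ)) h
  have e3 : ∀ i j, i < j → T.1 i j = T'.1 i j := by
    intro i j hij
    have := congrFun (congrFun e2 i) j
    simp only [hij, if_true] at this
    have a := hz T i j
    have b := hz T' i j
    rw [this] at a
    linarith
  apply Subtype.ext
  ext i j
  rcases lt_trichotomy i j with hij | hij | hij
  · exact e3 i j hij
  · subst hij; rw [hd, hd, e1]
  · have s1 : T.1 i j = T.1 j i := by simpa using (T.2.1.1.apply i j).symm
    have s2 : T'.1 i j = T'.1 j i := by simpa using (T'.2.1.1.apply i j).symm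
    rw [s1, s2, e3 j i hij]

lemma sum_bound {n : ℕ} (hn : 1 ≤ n) (b : Fin n → ℝ) (hb : ∀ i, 0 < b i) :
    ∑' T : Lambda n, ENNReal.ofReal (Real.exp (-∑ i, b i * T.1 i i)) ≤
      ENNReal.ofReal (5 ^ (n * n) *
        ∏ i, (2 * √((n - 1).factorial : ℝ) * (√(b i) ^ (n + 1))⁻¹)) := by
  obtain ⟨φ, hφ, hd⟩ := lambda_inj n
  have h1 : ∀ T : Lambda n, ENNReal.ofReal (Real.exp (-∑ i, b i * T.1 i i)) =
      (fun x : (Σ d : Fin n → ℕ, offBox d) =>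
        ENNReal.ofReal (Real.exp (-∑ i, b i * ((x.1 i : ℝ) + 1)))) (φ T) := by
    intro T; simp only [hd]
  rw [tsum_congr h1]
  refine (ENNReal.tsum_comp_le_tsum_of_injective hφ
    (fun x : (Σ d : Fin n → ℕ, offBox d) =>
        ENNReal.ofReal (Real.exp (-∑ i, b i * ((x.1 i : ℝ) + 1))))).trans ?_
  rw [ENNReal.tsum_sigma']
  have h2 : ∀ d : Fin n → ℕ, ∑' _ : offBox d,
      ENNReal.ofReal (Real.exp (-∑ i, b i * ((d i : ℝ) + 1))) ≤
      ENNReal.ofReal (5 ^ (n * n)) * ∏ i, ENNReal.ofReal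
        (√((d i : ℝ) + 1) ^ (n - 1) * Real.exp (-(b i * ((d i : ℝ) + 1)))) := by
    intro d
    rw [tsum_fintype, Finset.sum_const, nsmul_eq_mul, Finset.card_univ, Fintype.card_coe,
      ← ENNReal.ofReal_natCast, ← ENNReal.ofReal_mul (by positivity),
      ← ENNReal.ofReal_prod_of_nonneg (fun i _ => by positivity),
      ← ENNReal.ofReal_mul (by positivity)]
    apply ENNReal.ofReal_le_ofReal
    rw [Finset.prod_mul_distrib, ← Real.exp_sum, Finset.sum_neg_distrib, ← mul_assoc]
    gcongr
    exact offBox_card d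
  refine (ENNReal.tsum_le_tsum h2).trans ?_
  rw [ENNReal.tsum_mul_left, tsum_pi_prod n (fun i m => ENNReal.ofReal
        (√((m : ℝ) + 1) ^ (n - 1) * Real.exp (-(b i * ((m : ℝ) + 1))))),
    ENNReal.ofReal_mul (by positivity), ENNReal.ofReal_prod_of_nonneg (fun i _ => by positivity)]
  gcongr with i
  have := one_dim (n - 1) (b i) (hb i)
  rwa [show n - 1 + 2 = n + 1 by omega] at this

/-- The key pointwise bound. -/
lemma term_bound {n k : ℕ} {α β A : ℝ} (hA : 0 < A) (hk4 : 4 ≤ k) (hkβ : 2 * |β| < k)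
    {p : Lambda n → ℝ} (hp : Admissible n k α β A p)
    {Y : Matrix (Fin n) (Fin n) ℝ} (hY : Y.PosDef) (T : Lambda n) :
    Real.sqrt (p T) * Y.det ^ ((k : ℝ) / 2) * Real.exp (-2 * π * (T.1 * Y).trace) ≤
      A * Real.exp (n * (β * Real.log (4 * π) + β + ((1 - β) + (1 - β) ^ 2))) *
      (((k : ℝ) ^ n / Y.det) ^ (-β) * (k : ℝ) ^ ((n : ℝ) / 4 + α)) *
        Real.exp (-(4 * π / k * (T.1 * Y).trace)) := by
  have hT := T.2.1
  have hD : 0 < T.1.det := hT.det_pos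
  have hE : 0 < Y.det := hY.det_pos
  have hk4' : (4 : ℝ) ≤ k := by exact_mod_cast hk4
  have hk : (0 : ℝ) < k := by linarith
  have hπ := Real.pi_pos
  have hG : 0 < Real.Gamma k := Real.Gamma_pos_of_pos hk
  have h := hp.2 T
  set D := T.1.det with hDdef
  set E := Y.det with hEdef
  set τ := (T.1 * Y).trace with hτ
  set a : ℝ := (k : ℝ) / 2 - β with ha
  have hapos : 0 < a := by have := le_abs_self β; rw [ha]; linarith
  set m : ℝ := (k : ℝ) / 2 - 1 with hm
  have hm1 : 1 ≤ m := by rw [hm]; linarith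
  set s : ℝ := m / a with hs
  have hspos : 0 < s := by positivity
  -- Stirling
  have hst : k * Real.log k - k - Real.log k / 2 ≤ Real.log (Real.Gamma k) := by
    have h1 := Stirling.le_log_factorial_stirling (n := k) (by omega)
    have h2 : (k.factorial : ℝ) = k * Real.Gamma k := by
      rw [← Real.Gamma_add_one hk.ne', Real.Gamma_nat_eq_factorial]
    rw [h2, Real.log_mul hk.ne' hG.ne'] at h1
    have h3 : 0 ≤ Real.log (2 * π) := Real.log_nonneg (by linarith [Real.pi_gt_three])
    linarith
  -- AM-GM
  have hamgm : Real.log D + Real.log E ≤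
      4 * π * s / k * τ - n - n * (Real.log s + Real.log (4 * π) - Real.log k) := by
    have hc : 0 < 4 * π * s / k := by positivity
    have h1 := det_mul_le (hT.posSemidef.smul hc.le) hY.posSemidef
    rw [Matrix.det_smul, Matrix.smul_mul, Matrix.trace_smul, Fintype.card_fin, smul_eq_mul] at h1
    have h2 := Real.log_le_log (by positivity) h1
    rw [Real.log_exp, Real.log_mul (by positivity) hE.ne', Real.log_mul (by positivity) hD.ne',
      Real.log_pow, Real.log_div (by positivity) hk.ne', Real.log_mul (by positivity) hspos.ne'] at h2
    linarith
  -- bound on s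
  have hlogs : -(a * Real.log s) ≤ (1 - β) + (1 - β) ^ 2 := by
    have h1 : -Real.log s = Real.log (a / m) := by rw [← Real.log_inv, hs, inv_div]
    have h2 : Real.log (a / m) ≤ a / m - 1 := Real.log_le_sub_one_of_pos (by positivity)
    have h3 : a / m - 1 = (1 - β) / m := by
      have : m ≠ 0 := by positivity
      field_simp; rw [ha, hm]; ring
    have h4 : a * ((1 - β) / m) = (1 - β) + (1 - β) ^ 2 / m := by
      have : m ≠ 0 := by positivity
      have h5 : a = m + (1 - β) := by rw [ha, hm]; ring
      rw [h5]
      field_simp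
    have h5 : (1 - β) ^ 2 / m ≤ (1 - β) ^ 2 := div_le_self (sq_nonneg _) hm1
    calc -(a * Real.log s) = a * Real.log (a / m) := by rw [← h1]; ring
      _ ≤ a * ((1 - β) / m) := by rw [← h3]; gcongr
      _ ≤ _ := by rw [h4]; linarith
  have hL : Real.sqrt (p T) * E ^ ((k : ℝ) / 2) * Real.exp (-2 * π * τ) ≤
      A * (4 * π) ^ ((n * k : ℝ) / 2) * (k : ℝ) ^ α * D ^ a / Real.Gamma k ^ ((n : ℝ) / 2)
        * E ^ ((k : ℝ) / 2) * Real.exp (-2 * π * τ) := by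
    gcongr
  refine hL.trans ?_
  rw [← Real.log_le_log_iff (by positivity) (by positivity)]
  have l1 : Real.log (A * (4 * π) ^ ((n * k : ℝ) / 2) * (k : ℝ) ^ α * D ^ a /
      Real.Gamma k ^ ((n : ℝ) / 2) * E ^ ((k : ℝ) / 2) * Real.exp (-2 * π * τ)) =
      Real.log A + (n * k : ℝ) / 2 * Real.log (4 * π) + α * Real.log k + a * Real.log D
        - (n : ℝ) / 2 * Real.log (Real.Gamma k) + (k : ℝ) / 2 * Real.log E - 2 * π * τ := by
    rw [Real.log_mul (by positivity) (by positivity), Real.log_mul (by positivity) (by positivity),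
      Real.log_div (by positivity) (by positivity), Real.log_mul (by positivity) (by positivity),
      Real.log_mul (by positivity) (by positivity), Real.log_mul (by positivity) (by positivity),
      Real.log_rpow (by positivity), Real.log_rpow hk, Real.log_rpow hD, Real.log_rpow hG,
      Real.log_rpow hE, Real.log_exp]
    ring
  have l2 : Real.log (A * Real.exp (n * (β * Real.log (4 * π) + β + ((1 - β) + (1 - β) ^ 2))) *
      (((k : ℝ) ^ n / E) ^ (-β) * (k : ℝ) ^ ((n : ℝ) / 4 + α)) *
        Real.exp (-(4 * π / k * τ))) =
      Real.log A + (n * (β * Real.log (4 * π) + β + ((1 - β) + (1 - β) ^ 2))) +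
        (-β * (n * Real.log k - Real.log E) + ((n : ℝ) / 4 + α) * Real.log k)
        - 4 * π / k * τ := by
    generalize Real.log (4 * π) = L
    rw [Real.log_mul (by positivity) (by positivity), Real.log_mul (by positivity) (by positivity),
      Real.log_mul (by positivity) (by positivity), Real.log_mul (by positivity) (by positivity),
      Real.log_rpow (by positivity), Real.log_rpow hk, Real.log_div (by positivity) hE.ne',
      Real.log_pow, Real.log_exp, Real.log_exp]
    ring
  rw [l1, l2]
  have g1 := mul_le_mul_of_nonneg_left hamgm hapos.le
  have g2 : a * (4 * π * s / k * τ - n - n * (Real.log s + Real.log (4 * π) - Real.log k)) =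
      2 * π * τ - 4 * π / k * τ - n * a + n * (-(a * Real.log s))
        - n * a * (Real.log (4 * π) - Real.log k) := by
    have has : a * s = m := by rw [hs]; field_simp
    have : a * (4 * π * s / k * τ) = 2 * π * τ - 4 * π / k * τ := by
      calc a * (4 * π * s / k * τ) = 4 * π * (a * s) / k * τ := by ring
        _ = _ := by rw [has, hm]; field_simp; ring
    linear_combination this
  rw [g2] at g1
  have hn0 : (0 : ℝ) ≤ n := Nat.cast_nonneg n
  have g3 := mul_le_mul_of_nonneg_left hlogs hn0
  have g4 := mul_le_mul_of_nonneg_left hst (show (0 : ℝ) ≤ (n : ℝ) / 2 by positivity)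
  have g5 : (k : ℝ) / 2 = a + β := by rw [ha]; ring
  have g6 : (k : ℝ) = 2 * a + 2 * β := by rw [ha]; ring
  generalize Real.log k = κ at *
  generalize 4 * π / (k : ℝ) * τ = w at *
  rw [g6] at g4 ⊢
  nlinarith [g1, g3, g4]


lemma trace_lower {n : ℕ} {r : ℝ} {T Y : Matrix (Fin n) (Fin n) ℝ} (hT : T.PosSemidef)
    (h : LoewnerLE (r⁻¹ • diagPart Y) Y) : ∑ i, r⁻¹ * (Y i i * T i i) ≤ (T * Y).trace := by
  have h1 := trace_mul_nonneg' hT h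
  rw [Matrix.mul_sub, Matrix.trace_sub, Matrix.mul_smul, Matrix.trace_smul] at h1
  have h2 : (T * diagPart Y).trace = ∑ i, Y i i * T i i := by
    simp [diagPart, Matrix.trace, Matrix.mul_diagonal, mul_comm]
  rw [h2, smul_eq_mul, Finset.mul_sum] at h1
  linarith

lemma prod_bound {n k : ℕ} {r : ℝ} (hr : 1 ≤ r) (hk : (0 : ℝ) < k)
    {Y : Matrix (Fin n) (Fin n) ℝ} (hY : Y.PosDef) (M : ℝ) (hM : 0 ≤ M) :
    ∏ i, (M * (√(4 * π / k * r⁻¹ * Y i i) ^ (n + 1))⁻¹) ≤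
      (M ^ n * (r ^ n) ^ (((n : ℝ) + 1) / 2)) * ((k : ℝ) ^ n / Y.det) ^ (((n : ℝ) + 1) / 2) := by
  have hE : 0 < Y.det := hY.det_pos
  have hd : ∀ i, 0 < Y i i := fun i => hY.diag_pos
  have hr0 : 0 < r := by linarith
  have hπ := Real.pi_gt_three
  have hP : 0 < ∏ i, Y i i := Finset.prod_pos fun i _ => hd i
  have hs : ∀ x : ℝ, 0 < x → (√x ^ (n + 1))⁻¹ = x⁻¹ ^ (((n : ℝ) + 1) / 2) := by
    intro x hx
    rw [Real.inv_rpow hx.le, Real.sqrt_eq_rpow, ← Real.rpow_natCast, ← Real.rpow_mul hx.le]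
    congr 2; push_cast; ring
  have h1 : ∀ i, (√(4 * π / k * r⁻¹ * Y i i) ^ (n + 1))⁻¹ ≤
      (k * r * (Y i i)⁻¹) ^ (((n : ℝ) + 1) / 2) := by
    intro i
    have hi := hd i
    rw [hs _ (by positivity)]
    apply Real.rpow_le_rpow (by positivity) _ (by positivity)
    have : (4 * π / k * r⁻¹ * Y i i)⁻¹ = (4 * π)⁻¹ * (k * r * (Y i i)⁻¹) := by
      field_simp
    rw [this]
    apply mul_le_of_le_one_left (by positivity)
    exact inv_le_one_of_one_le₀ (by linarith)
  calc ∏ i, (M * (√(4 * π / k * r⁻¹ * Y i i) ^ (n + 1))⁻¹)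
      ≤ ∏ i, (M * (k * r * (Y i i)⁻¹) ^ (((n : ℝ) + 1) / 2)) := by
        apply Finset.prod_le_prod
        · intro i _; positivity
        · intro i _; exact mul_le_mul_of_nonneg_left (h1 i) hM
    _ = M ^ n * ((k * r) ^ n * (∏ i, Y i i)⁻¹) ^ (((n : ℝ) + 1) / 2) := by
        rw [Finset.prod_mul_distrib, Real.finsetProd_rpow _ _ (fun i _ => by
          have := hd i; positivity), Finset.prod_mul_distrib, Finset.prod_inv_distrib]
        simp
    _ ≤ M ^ n * ((k * r) ^ n * (Y.det)⁻¹) ^ (((n : ℝ) + 1) / 2) := by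
        gcongr
        exact hadamard_le hY
    _ = _ := by
        rw [mul_assoc (M ^ n), ← Real.mul_rpow (by positivity) (by positivity)]
        congr 2
        rw [mul_pow]; ring

theorem statement5 {n : ℕ} (hn : 1 ≤ n) (r ε α β A : ℝ) (hr : 1 ≤ r)
    (hε : ε ∈ Set.Ioo (0 : ℝ) 1) (hA : 0 < A) :
    ∃ C : ℝ, 0 < C ∧ ∃ c₀ : ℝ, 0 < c₀ ∧ ∃ k₀ : ℕ, ∀ k : ℕ, k₀ ≤ k →
      ∀ p : Lambda n → ℝ, Admissible n k α β A p →
      ∀ Y : Matrix (Fin n) (Fin n) ℝ, MinkReduced r Y →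
        qk n k p Y ≤ ENNReal.ofReal
          (C * (((k : ℝ) ^ n / Y.det) ^ (((n : ℝ) + 1) / 2 - β) *
              (k : ℝ) ^ ((n : ℝ) / 4 + α) +
            Real.exp (-c₀ * (k : ℝ) ^ ε) * Y.det ^ (-((n : ℝ) + 1) / 2))) := by
  have hr0 : 0 < r := by linarith
  set C1 : ℝ := A * Real.exp (n * (β * Real.log (4 * π) + β + ((1 - β) + (1 - β) ^ 2))) with hC1
  set M : ℝ := 2 * √((n - 1).factorial : ℝ) with hM
  have hC1p : 0 < C1 := by positivity
  have hMp : 0 < M := by positivity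
  set C2 : ℝ := 5 ^ (n * n) * (M ^ n * (r ^ n) ^ (((n : ℝ) + 1) / 2)) with hC2
  have hC2p : 0 < C2 := by positivity
  refine ⟨C1 * C2, by positivity, 1, one_pos, 4 + ⌈2 * |β|⌉₊, ?_⟩
  intro k hk p hp Y hY
  have hk4 : 4 ≤ k := by omega
  have hkβ : 2 * |β| < k := by
    have h1 := Nat.le_ceil (2 * |β|)
    have h2 : ((4 + ⌈2 * |β|⌉₊ : ℕ) : ℝ) ≤ k := by exact_mod_cast hk
    push_cast at h2
    linarith
  have hk0 : (0 : ℝ) < k := by exact_mod_cast (by omega : 0 < k)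
  have hE : 0 < Y.det := hY.1.det_pos
  set X : ℝ := (k : ℝ) ^ n / Y.det with hX
  have hXp : 0 < X := by positivity
  set Q : ℝ := X ^ (-β) * (k : ℝ) ^ ((n : ℝ) / 4 + α) with hQ
  have hQp : 0 < Q := by positivity
  have hd : ∀ i, 0 < Y i i := fun i => hY.1.diag_pos
  have hπ := Real.pi_pos
  set b : Fin n → ℝ := fun i => 4 * π / k * r⁻¹ * Y i i with hb
  have hbp : ∀ i, 0 < b i := fun i => by have := hd i; positivity
  have hpt : ∀ T : Lambda n, ENNReal.ofReal
      (Real.sqrt (p T) * Y.det ^ ((k : ℝ) / 2) * Real.exp (-2 * π * (T.1 * Y).trace)) ≤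
      ENNReal.ofReal (C1 * Q) * ENNReal.ofReal (Real.exp (-∑ i, b i * T.1 i i)) := by
    intro T
    rw [← ENNReal.ofReal_mul (by positivity)]
    apply ENNReal.ofReal_le_ofReal
    refine (term_bound hA hk4 hkβ hp hY.1 T).trans ?_
    have h1 := trace_lower T.2.1.posSemidef hY.2.1
    have h2 : ∑ i, b i * T.1 i i ≤ 4 * π / k * (T.1 * Y).trace := by
      calc ∑ i, b i * T.1 i i = 4 * π / k * ∑ i, r⁻¹ * (Y i i * T.1 i i) := by
            rw [Finset.mul_sum]; refine Finset.sum_congr rfl fun i _ => ?_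
            simp only [hb]; ring
        _ ≤ _ := by gcongr
    apply mul_le_mul_of_nonneg_left _ (by positivity)
    exact Real.exp_le_exp.2 (neg_le_neg h2)
  unfold qk
  refine (ENNReal.tsum_le_tsum hpt).trans ?_
  rw [ENNReal.tsum_mul_left]
  refine (mul_le_mul_right (sum_bound hn b hbp) _).trans ?_
  rw [← ENNReal.ofReal_mul (by positivity)]
  apply ENNReal.ofReal_le_ofReal
  have hpb := prod_bound hr hk0 hY.1 M hMp.le
  calc C1 * Q * (5 ^ (n * n) * ∏ i, (M * (√(b i) ^ (n + 1))⁻¹))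
      ≤ C1 * Q * (5 ^ (n * n) * ((M ^ n * (r ^ n) ^ (((n : ℝ) + 1) / 2)) *
          X ^ (((n : ℝ) + 1) / 2))) := by gcongr
    _ = C1 * C2 * (X ^ (((n : ℝ) + 1) / 2 - β) * (k : ℝ) ^ ((n : ℝ) / 4 + α)) := by
        rw [hQ, hC2, sub_eq_add_neg, Real.rpow_add hXp]; ring
    _ ≤ _ := by
        gcongr
        exact le_add_of_nonneg_right (by positivity)
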